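/- Let σ > 0, μ ∈ ℝ, ζ ≥ 0, L ≥ 0, B ≥ 0, K ∈ ℝ. Let r : ℝ → ℝ be Lipschitz continuous with constant L and nonnegative, let h : ℝ → ℝ be integrable against N(μ, σ²) with |r(y) − h(y)| ≤ B for all y ∈ ℝ, and let f ∈ ℝ satisfy |f − μ| ≤ ζ^{1/2}·σ. If ∫ h dN(μ, σ²) ≤ K, then r(f) ≤ K + L·(ζ^{1/2} + √(2/π))·σ + B. (The instant-regret bound of Lemma B.4, with K playing the role of β_t times the mutual information bound ensured by sufficient curiosity.) -/

import Mathlib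

open MeasureTheory ProbabilityTheory Real

/-- The mean absolute deviation of a real Gaussian of variance `v` is `√(2v/π)`. -/
theorem integral_abs_sub_gaussianReal (μ : ℝ) (v : NNReal) :
    ∫ x, |x - μ| ∂(gaussianReal μ v) = √(2 * v / π) := by
  rcases eq_or_ne v 0 with rfl | hv
  · simp
  have hv' : (0 : ℝ) < v := by positivity
  have hIoi : ∫ x in Set.Ioi (0 : ℝ), x * rexp (-(2 * (v : ℝ))⁻¹ * x ^ 2) = v := by
    have key := integral_rpow_mul_exp_neg_mul_rpow (p := 2) (q := 1) (b := (2 * (v : ℝ))⁻¹)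
      (by norm_num) (by norm_num) (by positivity)
    norm_num [Real.rpow_neg_one] at key
    norm_num
    rw [key]
    ring
  rw [integral_gaussianReal_eq_integral_smul hv]
  calc ∫ x, gaussianPDFReal μ v x • |x - μ|
      = ∫ x, (√(2 * π * v))⁻¹ * (|x - μ| * rexp (-(2 * (v : ℝ))⁻¹ * |x - μ| ^ 2)) := by
        congr with x
        rw [gaussianPDFReal, smul_eq_mul, sq_abs, neg_div, div_eq_inv_mul, neg_mul]
        ring
    _ = (√(2 * π * v))⁻¹ * ∫ x, |x| * rexp (-(2 * (v : ℝ))⁻¹ * |x| ^ 2) := by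
        rw [integral_const_mul,
          integral_sub_right_eq_self (fun x : ℝ ↦ |x| * rexp (-(2 * (v : ℝ))⁻¹ * |x| ^ 2)) μ]
    _ = (√(2 * π * v))⁻¹ * (2 * v) := by
        rw [integral_comp_abs (f := fun x ↦ x * rexp (-(2 * (v : ℝ))⁻¹ * x ^ 2)), hIoi]
    _ = √(2 * v / π) := by
        symm
        rw [Real.sqrt_eq_iff_eq_sq (by positivity) (by positivity), mul_pow, inv_pow,
          Real.sq_sqrt (by positivity)]
        field_simp

/-- Instant-regret bound of Lemma B.4: if `r` is `L`-Lipschitz and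
nonnegative, `h` is integrable with `|r − h| ≤ B`, `|f − μ| ≤ √ζ·σ`, and
`∫ h dN(μ, σ²) ≤ K`, then `r(f) ≤ K + L·(√ζ + √(2/π))·σ + B`. -/
theorem instant_regret_bound (σ μ ζ L B K f : ℝ) (r h : ℝ → ℝ)
    (hσ : 0 < σ) (hζ : 0 ≤ ζ) (hL : 0 ≤ L) (hB : 0 ≤ B)
    (hLip : ∀ y₁ y₂ : ℝ, |r y₁ - r y₂| ≤ L * |y₁ - y₂|)
    (hrpos : ∀ y, 0 ≤ r y)
    (hint : Integrable h (gaussianReal μ (Real.toNNReal (σ ^ 2))))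
    (halign : ∀ y : ℝ, |r y - h y| ≤ B)
    (hf : |f - μ| ≤ ζ ^ ((1 : ℝ) / 2) * σ)
    (hK : ∫ y, h y ∂(gaussianReal μ (Real.toNNReal (σ ^ 2))) ≤ K) :
    r f ≤ K + L * (ζ ^ ((1 : ℝ) / 2) + Real.sqrt (2 / π)) * σ + B := by
  have hsd : ∫ y, |y - μ| ∂(gaussianReal μ (Real.toNNReal (σ ^ 2))) = √(2 / π) * σ := by
    rw [integral_abs_sub_gaussianReal, Real.coe_toNNReal _ (sq_nonneg σ),
      mul_div_right_comm, Real.sqrt_mul (by positivity), Real.sqrt_sq hσ.le]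
  have habs : Integrable (fun y ↦ L * |y - μ|) (gaussianReal μ (Real.toNNReal (σ ^ 2))) :=
    (((memLp_id_gaussianReal 1).integrable le_rfl).sub (integrable_const μ)).abs.const_mul L
  have hpt (y : ℝ) : r f - (B + L * |f - μ|) ≤ h y + L * |y - μ| := by
    have hlip := (abs_le.mp (hLip f y)).2
    have htri := mul_le_mul_of_nonneg_left (abs_sub_le f μ y) hL
    rw [abs_sub_comm μ y] at htri
    linarith [(abs_le.mp (halign y)).2]
  have hmono := integral_mono (integrable_const _) (hint.add habs) hpt
  simp only [integral_const, probReal_univ, one_smul, Pi.add_apply] at hmono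
  rw [integral_add hint habs, integral_const_mul, hsd] at hmono
  linarith [mul_le_mul_of_nonneg_left hf hL]
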